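/- Fix ω0 ∈ ℝ, σ0² > 0, σH² > 0, and h ∈ (0,1). For r ∈ (0,∞), define D_r(ω) := ∫_{ω0−r}^{ω0+r} f(t|ω) dt, the censored posterior mean a*(s,r) := (∫ ω·f(s|ω)·φ(ω; ω0, σ0²)/D_r(ω) dω) / (∫ f(s|ω)·φ(ω; ω0, σ0²)/D_r(ω) dω), and the expected quadratic loss of censoring to radius r, L(r) := ∫ ( ∫_{ω0−r}^{ω0+r} (ω − a*(s,r))²·(f(s|ω)/D_r(ω)) ds )·φ(ω; ω0, σ0²) dω. Define the uncensored posterior mean a*(s,∞) := (∫ ω·f(s|ω)·φ(ω; ω0, σ0²) dω) / (∫ f(s|ω)·φ(ω; ω0, σ0²) dω) and the uncensored expected loss L(∞) := ∫∫ (ω − a*(s,∞))²·f(s|ω)·φ(ω; ω0, σ0²) ds dω. Then there exists a threshold ν* > σH² such that whenever σL² ≥ ν*, there exists a finite radius r ∈ (0,∞) with L(r) < L(∞). -/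

import Mathlib

open MeasureTheory Real Filter

/-- The Gaussian density with mean `m` and variance `v`. -/
noncomputable def gauss (x m v : ℝ) : ℝ :=
  (Real.sqrt (2 * Real.pi * v))⁻¹ * Real.exp (-(x - m) ^ 2 / (2 * v))

/-- The mixture signal density `f(s|ω) = h·φ(s;ω,vH) + (1−h)·φ(s;ω,vL)`. -/
noncomputable def mixDens (h vH vL s ω : ℝ) : ℝ :=
  h * gauss s ω vH + (1 - h) * gauss s ω vL

/-- `D_r(ω)`: the probability of the window `[ω0−r, ω0+r]` under the mixture density. -/
noncomputable def winProb (h vH vL ω0 r ω : ℝ) : ℝ :=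
  ∫ t in Set.Icc (ω0 - r) (ω0 + r), mixDens h vH vL t ω

/-- The censored posterior-mean action `a*(s,r)`. -/
noncomputable def aCens (h vH vL ω0 v0 r s : ℝ) : ℝ :=
  (∫ ω : ℝ, ω * (mixDens h vH vL s ω * gauss ω ω0 v0 / winProb h vH vL ω0 r ω)) /
    (∫ ω : ℝ, mixDens h vH vL s ω * gauss ω ω0 v0 / winProb h vH vL ω0 r ω)

/-- `L(r)`: the expected quadratic loss of censoring to radius `r`. -/
noncomputable def lossCens (h vH vL ω0 v0 r : ℝ) : ℝ :=
  ∫ ω : ℝ,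
    (∫ s in Set.Icc (ω0 - r) (ω0 + r),
        (ω - aCens h vH vL ω0 v0 r s) ^ 2 * (mixDens h vH vL s ω / winProb h vH vL ω0 r ω)) *
      gauss ω ω0 v0

/-- The uncensored posterior-mean action `a*(s,∞)`. -/
noncomputable def aUncens (h vH vL ω0 v0 s : ℝ) : ℝ :=
  (∫ ω : ℝ, ω * (mixDens h vH vL s ω * gauss ω ω0 v0)) /
    (∫ ω : ℝ, mixDens h vH vL s ω * gauss ω ω0 v0)

/-- `L(∞)`: the expected quadratic loss without censoring. -/
noncomputable def lossUncens (h vH vL ω0 v0 : ℝ) : ℝ :=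
  ∫ ω : ℝ,
    (∫ s : ℝ, (ω - aUncens h vH vL ω0 v0 s) ^ 2 * mixDens h vH vL s ω) * gauss ω ω0 v0

open ProbabilityTheory

lemma gauss_eq_pdf (m v : ℝ) (hv : 0 ≤ v) (x : ℝ) :
    gauss x m v = gaussianPDFReal m v.toNNReal x := by
  simp only [gauss, gaussianPDFReal, Real.coe_toNNReal v hv]

lemma gauss_nonneg (x m v : ℝ) : 0 ≤ gauss x m v := by unfold gauss; positivity

lemma gauss_pos (x m v : ℝ) (hv : 0 < v) : 0 < gauss x m v := by unfold gauss; positivity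

lemma gauss_symm (x m v : ℝ) : gauss x m v = gauss m x v := by
  unfold gauss; congr 3; ring

lemma gauss_le (x m v : ℝ) (hv : 0 < v) : gauss x m v ≤ (Real.sqrt (2 * Real.pi * v))⁻¹ := by
  unfold gauss
  apply mul_le_of_le_one_right (by positivity)
  rw [Real.exp_le_one_iff]
  apply div_nonpos_of_nonpos_of_nonneg <;> nlinarith [sq_nonneg (x - m)]

lemma gauss_cont (v : ℝ) : Continuous (fun p : ℝ × ℝ => gauss p.1 p.2 v) := by
  unfold gauss; fun_prop

lemma gauss_meas (v : ℝ) : Measurable (fun p : ℝ × ℝ => gauss p.1 p.2 v) :=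
  (gauss_cont v).measurable

lemma gauss_meas1 (m v : ℝ) : Measurable (fun x : ℝ => gauss x m v) := by
  unfold gauss; fun_prop

lemma integrable_gauss_iff (m v : ℝ) (hv : 0 < v) (g : ℝ → ℝ)
    (hi : Integrable g (gaussianReal m v.toNNReal)) :
    Integrable (fun x => g x * gauss x m v) := by
  have hne : v.toNNReal ≠ 0 := by simpa using hv
  rw [gaussianReal_of_var_ne_zero _ hne] at hi
  rw [integrable_withDensity_iff (measurable_gaussianPDF _ _)
    (by simp [gaussianPDF])] at hi
  simp only [toReal_gaussianPDF] at hi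
  simpa only [gauss_eq_pdf m v hv.le] using hi

lemma integral_gauss_mul (m v : ℝ) (hv : 0 < v) (g : ℝ → ℝ) :
    ∫ x, g x * gauss x m v = ∫ x, g x ∂(gaussianReal m v.toNNReal) := by
  have hne : v.toNNReal ≠ 0 := by simpa using hv
  rw [integral_gaussianReal_eq_integral_smul hne]
  congr 1; ext x; rw [gauss_eq_pdf m v hv.le, smul_eq_mul, mul_comm]

lemma integrable_pow_gauss (m v c : ℝ) (hv : 0 < v) (n : ℕ) :
    Integrable (fun x => (x - c) ^ n * gauss x m v) := by
  apply integrable_gauss_iff m v hv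
  have h1 : MemLp (fun x : ℝ => x - c) n (gaussianReal m v.toNNReal) :=
    (memLp_id_gaussianReal (n : NNReal)).sub (memLp_const c)
  have := h1.integrable_norm_pow'
  refine (integrable_norm_iff (by fun_prop)).1 ?_
  simpa using this

lemma integrable_gauss (m v : ℝ) (hv : 0 < v) : Integrable (fun x => gauss x m v) := by
  simpa using integrable_pow_gauss m v 0 hv 0

lemma integral_gauss1 (m v : ℝ) (hv : 0 < v) : ∫ x, gauss x m v = 1 := by
  have := integral_gauss_mul m v hv (fun _ => 1)
  simpa using this

lemma integral_sq_gauss (m v c : ℝ) (hv : 0 < v) :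
    ∫ x, (x - c) ^ 2 * gauss x m v = v + (m - c) ^ 2 := by
  have i0 := integrable_gauss m v hv
  have i1 := integrable_pow_gauss m v m hv 1
  have i2 := integrable_pow_gauss m v m hv 2
  have e : (fun x => (x - c) ^ 2 * gauss x m v) = fun x => ((x - m) ^ 2 * gauss x m v +
      (2 * (m - c)) * ((x - m) ^ 1 * gauss x m v)) + (m - c) ^ 2 * gauss x m v := by
    ext x; ring
  rw [e, integral_add (i2.fun_add (i1.const_mul _)) (i0.const_mul _), integral_add i2 (i1.const_mul _),
    integral_const_mul, integral_const_mul, integral_gauss1 m v hv]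
  have e1 : ∫ x, (x - m) ^ 1 * gauss x m v = 0 := by
    rw [integral_gauss_mul m v hv]
    simp only [pow_one]
    have hi : Integrable (fun x : ℝ => x) (gaussianReal m v.toNNReal) :=
      (memLp_id_gaussianReal (1 : NNReal)).integrable (by simp)
    rw [integral_sub hi (integrable_const _)]
    simp
  have e2 : ∫ x, (x - m) ^ 2 * gauss x m v = v := by
    rw [integral_gauss_mul m v hv]
    have := variance_id_gaussianReal (μ := m) (v := v.toNNReal)
    rw [variance_eq_integral (by fun_prop)] at this
    simpa [hv.le] using this
  rw [e1, e2]; ring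

/-- optimality of the posterior mean, general weights -/
lemma opt_action (w : ℝ → ℝ) (hw : ∀ x, 0 ≤ w x) (h0 : Integrable w)
    (h1 : Integrable (fun x => x * w x)) (h2 : Integrable (fun x => x ^ 2 * w x)) (b : ℝ) :
    ∫⁻ x, ENNReal.ofReal ((x - (∫ x, x * w x) / (∫ x, w x)) ^ 2 * w x) ≤
      ∫⁻ x, ENNReal.ofReal ((x - b) ^ 2 * w x) := by
  have hi : ∀ c : ℝ, Integrable (fun x => (x - c) ^ 2 * w x) := by
    intro c
    have : (fun x => (x - c) ^ 2 * w x) =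
      fun x => (x ^ 2 * w x + (-2 * c) * (x * w x)) + c ^ 2 * w x := by ext x; ring
    rw [this]
    exact (h2.fun_add (h1.const_mul _)).fun_add (h0.const_mul _)
  have hc : ∀ c : ℝ, ∫ x, (x - c) ^ 2 * w x =
      (∫ x, x ^ 2 * w x) + (-2 * c) * (∫ x, x * w x) + c ^ 2 * ∫ x, w x := by
    intro c
    have : (fun x => (x - c) ^ 2 * w x) =
      fun x => (x ^ 2 * w x + (-2 * c) * (x * w x)) + c ^ 2 * w x := by ext x; ring
    rw [this, integral_add (h2.fun_add (h1.const_mul _)) (h0.const_mul _),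
      integral_add h2 (h1.const_mul _), integral_const_mul, integral_const_mul]
  rw [← ofReal_integral_eq_lintegral_ofReal (hi _) (ae_of_all _ fun x => mul_nonneg (sq_nonneg _) (hw x)),
    ← ofReal_integral_eq_lintegral_ofReal (hi _) (ae_of_all _ fun x => mul_nonneg (sq_nonneg _) (hw x))]
  apply ENNReal.ofReal_le_ofReal
  rw [hc, hc]
  have hW : 0 ≤ ∫ x, w x := integral_nonneg hw
  rcases hW.eq_or_lt with hz | hp
  · have hae := (integral_eq_zero_iff_of_nonneg hw h0).1 hz.symm
    have : ∫ x, x * w x = 0 := by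
      rw [integral_eq_zero_of_ae]
      filter_upwards [hae] with x hx
      simp [hx]
    rw [this, ← hz]; simp
  · set W := ∫ x, w x
    set M := ∫ x, x * w x
    have : M = (M / W) * W := by field_simp
    set a := M / W
    rw [this]
    nlinarith [mul_nonneg hW (sq_nonneg (a - b))]

lemma swap_opt (μ : Measure ℝ) [SFinite μ] (K : ℝ → ℝ → ℝ) (hK : ∀ s x, 0 ≤ K s x)
    (hm : Measurable (fun p : ℝ × ℝ => K p.1 p.2))
    (h0 : ∀ s, Integrable (K s)) (h1 : ∀ s, Integrable (fun x => x * K s x))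
    (h2 : ∀ s, Integrable (fun x => x ^ 2 * K s x)) (b : ℝ → ℝ) (hb : Measurable b) :
    ∫⁻ x, ∫⁻ s, ENNReal.ofReal ((x - (∫ x, x * K s x) / (∫ x, K s x)) ^ 2 * K s x) ∂μ ≤
      ∫⁻ x, ∫⁻ s, ENNReal.ofReal ((x - b s) ^ 2 * K s x) ∂μ := by
  have hsw : ∀ c : ℝ → ℝ, Measurable c →
      ∫⁻ x, ∫⁻ s, ENNReal.ofReal ((x - c s) ^ 2 * K s x) ∂μ =
      ∫⁻ s, ∫⁻ x, ENNReal.ofReal ((x - c s) ^ 2 * K s x) ∂volume ∂μ := by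
    intro c hcm
    apply lintegral_lintegral_swap
    apply Measurable.aemeasurable
    apply Measurable.ennreal_ofReal
    have : Measurable (fun p : ℝ × ℝ => K p.2 p.1) := hm.comp measurable_swap
    exact ((measurable_fst.sub (hcm.comp measurable_snd)).pow_const 2).mul this
  have ha : Measurable (fun s => (∫ x, x * K s x) / (∫ x, K s x)) := by
    apply Measurable.div
    · refine (StronglyMeasurable.integral_prod_right (f := fun s x => x * K s x) ?_).measurable
      exact (measurable_snd.mul hm).stronglyMeasurable
    · exact (StronglyMeasurable.integral_prod_right (f := fun s x => K s x) hm.stronglyMeasurable).measurable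
  rw [hsw _ ha, hsw _ hb]
  exact lintegral_mono fun s => opt_action _ (hK s) (h0 s) (h1 s) (h2 s) _

lemma iter_integral_eq (μ : Measure ℝ) [SFinite μ] (F : ℝ → ℝ → ℝ) (hF : ∀ x s, 0 ≤ F x s)
    (hm : Measurable (fun p : ℝ × ℝ => F p.1 p.2))
    (hT : ∫⁻ x, ∫⁻ s, ENNReal.ofReal (F x s) ∂μ ≠ ⊤) :
    ∫ x, ∫ s, F x s ∂μ = (∫⁻ x, ∫⁻ s, ENNReal.ofReal (F x s) ∂μ).toReal := by
  have hmm : Measurable (fun x => ∫⁻ s, ENNReal.ofReal (F x s) ∂μ) :=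
    Measurable.lintegral_prod_right' (f := fun p : ℝ × ℝ => ENNReal.ofReal (F p.1 p.2))
      hm.ennreal_ofReal
  rw [← integral_toReal hmm.aemeasurable (ae_lt_top hmm hT)]
  congr 1; ext x
  refine integral_eq_lintegral_of_nonneg_ae (ae_of_all _ fun s => hF x s) ?_
  exact (hm.comp measurable_prodMk_left).aestronglyMeasurable

lemma iter_opt (μ : Measure ℝ) [SFinite μ] (K : ℝ → ℝ → ℝ) (hK : ∀ s x, 0 ≤ K s x)
    (hm : Measurable (fun p : ℝ × ℝ => K p.1 p.2))
    (h0 : ∀ s, Integrable (K s)) (h1 : ∀ s, Integrable (fun x => x * K s x))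
    (h2 : ∀ s, Integrable (fun x => x ^ 2 * K s x)) (b : ℝ → ℝ) (hb : Measurable b)
    (hfin : ∫⁻ x, ∫⁻ s, ENNReal.ofReal ((x - b s) ^ 2 * K s x) ∂μ ≠ ⊤)
    (a : ℝ → ℝ) (haK : ∀ s, a s = (∫ x, x * K s x) / (∫ x, K s x)) :
    (∫⁻ s, ∫⁻ x, ENNReal.ofReal ((x - a s) ^ 2 * K s x) ∂volume ∂μ) ≠ ⊤ ∧
    (∫⁻ s, ∫⁻ x, ENNReal.ofReal ((x - a s) ^ 2 * K s x) ∂volume ∂μ) ≤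
      ∫⁻ x, ∫⁻ s, ENNReal.ofReal ((x - b s) ^ 2 * K s x) ∂μ ∧
    ∫ x, ∫ s, (x - a s) ^ 2 * K s x ∂μ =
      (∫⁻ s, ∫⁻ x, ENNReal.ofReal ((x - a s) ^ 2 * K s x) ∂volume ∂μ).toReal := by
  have hopt := swap_opt μ K hK hm h0 h1 h2 b hb
  simp only [← haK] at hopt
  have ha : Measurable a := by
    have : a = fun s => (∫ x, x * K s x) / (∫ x, K s x) := funext haK
    rw [this]
    apply Measurable.div
    · refine (StronglyMeasurable.integral_prod_right (f := fun s x => x * K s x) ?_).measurable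
      exact (measurable_snd.mul hm).stronglyMeasurable
    · exact (StronglyMeasurable.integral_prod_right (f := fun s x => K s x)
        hm.stronglyMeasurable).measurable
  have hFm : Measurable (fun p : ℝ × ℝ => (p.1 - a p.2) ^ 2 * K p.2 p.1) :=
    ((measurable_fst.sub (ha.comp measurable_snd)).pow_const 2).mul (hm.comp measurable_swap)
  have hT := ne_top_of_le_ne_top hfin hopt
  have hE := iter_integral_eq μ (fun x s => (x - a s) ^ 2 * K s x)
    (fun x s => mul_nonneg (sq_nonneg _) (hK s x)) hFm hT
  have hsw := lintegral_lintegral_swap (μ := volume) (ν := μ)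
    (f := fun x s => ENNReal.ofReal ((x - a s) ^ 2 * K s x)) hFm.ennreal_ofReal.aemeasurable
  rw [hsw] at hT hopt hE
  exact ⟨hT, hopt, hE⟩

lemma gauss_prod (s x m v v0 : ℝ) (hv : 0 < v) (hv0 : 0 < v0) :
    gauss s x v * gauss x m v0 =
      gauss s m (v + v0) * gauss x ((v0 * s + v * m) / (v + v0)) (v * v0 / (v + v0)) := by
  unfold gauss
  have h1 : √(2 * π * v) * √(2 * π * v0) =
      √(2 * π * (v + v0)) * √(2 * π * (v * v0 / (v + v0))) := by
    rw [← Real.sqrt_mul (by positivity), ← Real.sqrt_mul (by positivity)]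
    congr 1; field_simp
  have h2 : -(s - x) ^ 2 / (2 * v) + -(x - m) ^ 2 / (2 * v0) =
      -(s - m) ^ 2 / (2 * (v + v0)) +
        -(x - (v0 * s + v * m) / (v + v0)) ^ 2 / (2 * (v * v0 / (v + v0))) := by
    field_simp; ring
  rw [mul_mul_mul_comm, mul_mul_mul_comm (√(2 * π * (v + v0)))⁻¹, ← Real.exp_add, ← Real.exp_add,
    h2, ← mul_inv, ← mul_inv, h1]

lemma prod_integrable (s m v v0 a : ℝ) (n : ℕ) (hv : 0 < v) (hv0 : 0 < v0) :
    Integrable (fun x => (x - a) ^ n * (gauss s x v * gauss x m v0)) := by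
  have := (integrable_pow_gauss ((v0 * s + v * m) / (v + v0)) (v * v0 / (v + v0)) a
    (by positivity) n).const_mul (gauss s m (v + v0))
  refine this.congr (ae_of_all _ fun x => ?_)
  simp only [gauss_prod s x m v v0 hv hv0]; ring

lemma prod_integral_ge (s m v v0 a : ℝ) (hv : 0 < v) (hv0 : 0 < v0) :
    v * v0 / (v + v0) * gauss s m (v + v0) ≤
      ∫ x, (x - a) ^ 2 * (gauss s x v * gauss x m v0) := by
  have e : (fun x => (x - a) ^ 2 * (gauss s x v * gauss x m v0)) = fun x =>
      gauss s m (v + v0) * ((x - a) ^ 2 *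
        gauss x ((v0 * s + v * m) / (v + v0)) (v * v0 / (v + v0))) := by
    ext x; rw [gauss_prod s x m v v0 hv hv0]; ring
  rw [e, integral_const_mul, integral_sq_gauss _ _ _ (by positivity)]
  nlinarith [mul_nonneg (gauss_nonneg s m (v + v0))
    (sq_nonneg ((v0 * s + v * m) / (v + v0) - a))]

section
variable (h vH vL ω0 v0 : ℝ)

lemma mix_nonneg (hh0 : 0 < h) (hh1 : h < 1) (s x : ℝ) : 0 ≤ mixDens h vH vL s x :=
  add_nonneg (mul_nonneg hh0.le (gauss_nonneg _ _ _))
    (mul_nonneg (by linarith) (gauss_nonneg _ _ _))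

lemma mix_meas : Measurable (fun p : ℝ × ℝ => mixDens h vH vL p.1 p.2) := by
  unfold mixDens
  exact ((gauss_meas vH).const_mul h).add ((gauss_meas vL).const_mul _)

lemma mix_int_s (hvH : 0 < vH) (hvL : 0 < vL) (x : ℝ) :
    Integrable (fun s => mixDens h vH vL s x) := by
  unfold mixDens
  exact ((integrable_gauss x vH hvH).const_mul h).fun_add
    ((integrable_gauss x vL hvL).const_mul _)

lemma mix_integral (hvH : 0 < vH) (hvL : 0 < vL) (x : ℝ) :
    ∫ s, mixDens h vH vL s x = 1 := by
  unfold mixDens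
  rw [integral_add ((integrable_gauss x vH hvH).const_mul h)
    ((integrable_gauss x vL hvL).const_mul _), integral_const_mul, integral_const_mul,
    integral_gauss1 _ _ hvH, integral_gauss1 _ _ hvL]
  ring

lemma mixprod_integrable (hvH : 0 < vH) (hvL : 0 < vL) (hv0 : 0 < v0) (s a : ℝ) (n : ℕ) :
    Integrable (fun x => (x - a) ^ n * (mixDens h vH vL s x * gauss x ω0 v0)) := by
  have := ((prod_integrable s ω0 vH v0 a n hvH hv0).const_mul h).fun_add
    ((prod_integrable s ω0 vL v0 a n hvL hv0).const_mul (1 - h))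
  refine this.congr (ae_of_all _ fun x => ?_)
  simp only [mixDens]; ring

lemma mixprod_fin (hvH : 0 < vH) (hvL : 0 < vL) (hv0 : 0 < v0) (hh0 : 0 < h) (hh1 : h < 1) :
    ∫⁻ x, ∫⁻ s, ENNReal.ofReal ((x - ω0) ^ 2 * (mixDens h vH vL s x * gauss x ω0 v0)) ≠ ⊤ := by
  have : ∀ x, ∫⁻ s, ENNReal.ofReal ((x - ω0) ^ 2 * (mixDens h vH vL s x * gauss x ω0 v0)) =
      ENNReal.ofReal ((x - ω0) ^ 2 * gauss x ω0 v0) := by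
    intro x
    have e : (fun s => (x - ω0) ^ 2 * (mixDens h vH vL s x * gauss x ω0 v0)) =
      fun s => ((x - ω0) ^ 2 * gauss x ω0 v0) * mixDens h vH vL s x := by
      ext s; ring
    rw [← ofReal_integral_eq_lintegral_ofReal _
      (ae_of_all _ fun s => mul_nonneg (sq_nonneg _)
        (mul_nonneg (mix_nonneg h vH vL hh0 hh1 s x) (gauss_nonneg _ _ _))), e, integral_const_mul,
      mix_integral h vH vL hvH hvL, mul_one]
    rw [e]; exact (mix_int_s h vH vL hvH hvL x).const_mul _
  simp_rw [this]
  rw [← ofReal_integral_eq_lintegral_ofReal (integrable_pow_gauss _ _ _ hv0 2)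
    (ae_of_all _ fun s => mul_nonneg (sq_nonneg _) (gauss_nonneg _ _ _))]
  exact ENNReal.ofReal_ne_top

lemma mixprod_lower (hvH : 0 < vH) (hvL : 0 < vL) (hv0 : 0 < v0) (hh0 : 0 < h) (hh1 : h < 1)
    (s a : ℝ) :
    ENNReal.ofReal (h * ((vH * v0 / (vH + v0)) * gauss s ω0 (vH + v0)) +
        (1 - h) * ((vL * v0 / (vL + v0)) * gauss s ω0 (vL + v0))) ≤
    ∫⁻ x, ENNReal.ofReal ((x - a) ^ 2 * (mixDens h vH vL s x * gauss x ω0 v0)) := by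
  have h1h : 0 ≤ 1 - h := by linarith
  rw [← ofReal_integral_eq_lintegral_ofReal
    (mixprod_integrable h vH vL ω0 v0 hvH hvL hv0 s _ 2)
    (ae_of_all _ fun x => mul_nonneg (sq_nonneg _)
      (mul_nonneg (mix_nonneg h vH vL hh0 hh1 s x) (gauss_nonneg _ _ _)))]
  apply ENNReal.ofReal_le_ofReal
  have e2 : ∫ x, (x - a) ^ 2 * (mixDens h vH vL s x * gauss x ω0 v0) =
      h * (∫ x, (x - a) ^ 2 * (gauss s x vH * gauss x ω0 v0)) +
      (1 - h) * (∫ x, (x - a) ^ 2 * (gauss s x vL * gauss x ω0 v0)) := by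
    rw [← integral_const_mul, ← integral_const_mul, ← integral_add
      ((prod_integrable s ω0 vH v0 a 2 hvH hv0).const_mul h)
      ((prod_integrable s ω0 vL v0 a 2 hvL hv0).const_mul (1 - h))]
    congr 1; ext x; simp only [mixDens]; ring
  rw [e2]
  exact add_le_add (mul_le_mul_of_nonneg_left (prod_integral_ge _ _ _ _ _ hvH hv0) hh0.le)
    (mul_le_mul_of_nonneg_left (prod_integral_ge _ _ _ _ _ hvL hv0) h1h)

lemma marg_integral (hvH : 0 < vH) (hvL : 0 < vL) (hv0 : 0 < v0) (hh0 : 0 < h) (hh1 : h < 1) :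
    ENNReal.ofReal (h * (vH * v0 / (vH + v0)) + (1 - h) * (vL * v0 / (vL + v0))) =
    ∫⁻ s, ENNReal.ofReal (h * ((vH * v0 / (vH + v0)) * gauss s ω0 (vH + v0)) +
        (1 - h) * ((vL * v0 / (vL + v0)) * gauss s ω0 (vL + v0))) := by
  have iH := ((integrable_gauss ω0 (vH + v0) (by positivity)).const_mul
      (vH * v0 / (vH + v0))).const_mul h
  have iL := ((integrable_gauss ω0 (vL + v0) (by positivity)).const_mul
      (vL * v0 / (vL + v0))).const_mul (1 - h)
  have h1h : 0 ≤ 1 - h := by linarith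
  rw [← ofReal_integral_eq_lintegral_ofReal (iH.fun_add iL) (ae_of_all _ fun s => by
    have := gauss_nonneg s ω0 (vH + v0)
    have := gauss_nonneg s ω0 (vL + v0)
    simp only [Pi.zero_apply]; positivity)]
  rw [integral_add iH iL, integral_const_mul, integral_const_mul, integral_const_mul,
      integral_const_mul, integral_gauss1 _ _ (by positivity), integral_gauss1 _ _ (by positivity)]
  ring_nf

lemma lossUncens_ge (hvH : 0 < vH) (hvL : 0 < vL) (hv0 : 0 < v0) (hh0 : 0 < h) (hh1 : h < 1) :
    h * (vH * v0 / (vH + v0)) + (1 - h) * (vL * v0 / (vL + v0)) ≤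
      lossUncens h vH vL ω0 v0 := by
  have hgm : Measurable (fun x => gauss x ω0 v0) := gauss_meas1 _ _
  obtain ⟨hT, -, hE⟩ := iter_opt volume (fun s x => mixDens h vH vL s x * gauss x ω0 v0)
    (fun s x => mul_nonneg (mix_nonneg h vH vL hh0 hh1 s x) (gauss_nonneg _ _ _))
    ((mix_meas h vH vL).mul (hgm.comp measurable_snd))
    (fun s => by simpa using mixprod_integrable h vH vL ω0 v0 hvH hvL hv0 s 0 0)
    (fun s => by simpa using mixprod_integrable h vH vL ω0 v0 hvH hvL hv0 s 0 1)
    (fun s => by simpa using mixprod_integrable h vH vL ω0 v0 hvH hvL hv0 s 0 2)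
    (fun _ => ω0) measurable_const (mixprod_fin h vH vL ω0 v0 hvH hvL hv0 hh0 hh1)
    (aUncens h vH vL ω0 v0) (fun s => rfl)
  have hL : lossUncens h vH vL ω0 v0 = ∫ x, ∫ s, (x - aUncens h vH vL ω0 v0 s) ^ 2 *
      (mixDens h vH vL s x * gauss x ω0 v0) := by
    unfold lossUncens
    refine integral_congr_ae (ae_of_all _ fun x => ?_)
    simp only [← mul_assoc]
    rw [integral_mul_const]
  rw [hL, hE, ← ENNReal.ofReal_le_iff_le_toReal hT,
    marg_integral h vH vL ω0 v0 hvH hvL hv0 hh0 hh1]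
  exact lintegral_mono fun s => mixprod_lower h vH vL ω0 v0 hvH hvL hv0 hh0 hh1 s _

end

lemma winProb_lower (h vH vL ω0 r : ℝ) (hvH : 0 < vH) (hvL : 0 < vL) (hh0 : 0 < h) (hh1 : h < 1)
    (hr : 0 < r) (x : ℝ) :
    (1 - h) * ((√(2 * π * vL))⁻¹ * Real.exp (-((x - ω0) ^ 2 + r ^ 2) / vL)) * (2 * r) ≤
      winProb h vH vL ω0 r x := by
  unfold winProb
  have e : ∫ t in Set.Icc (ω0 - r) (ω0 + r),
      ((1 - h) * ((√(2 * π * vL))⁻¹ * Real.exp (-((x - ω0) ^ 2 + r ^ 2) / vL)) : ℝ) =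
      (1 - h) * ((√(2 * π * vL))⁻¹ * Real.exp (-((x - ω0) ^ 2 + r ^ 2) / vL)) * (2 * r) := by
    rw [setIntegral_const]
    simp only [Real.volume_real_Icc, smul_eq_mul]
    rw [max_eq_left (by linarith)]; ring
  rw [← e]
  apply setIntegral_mono_on (integrableOn_const (by simp)) (mix_int_s h vH vL hvH hvL x).integrableOn measurableSet_Icc
  intro t ht
  have h1 : (√(2 * π * vL))⁻¹ * Real.exp (-((x - ω0) ^ 2 + r ^ 2) / vL) ≤ gauss t x vL := by
    unfold gauss
    apply mul_le_mul_of_nonneg_left _ (by positivity)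
    apply Real.exp_le_exp.2
    rw [div_le_div_iff₀ hvL (by positivity)]
    have : (t - x) ^ 2 ≤ 2 * ((x - ω0) ^ 2 + r ^ 2) := by
      have : (t - ω0) ^ 2 ≤ r ^ 2 := by
        apply sq_le_sq'
        · linarith [ht.1]
        · linarith [ht.2]
      nlinarith [sq_nonneg ((t - ω0) + (x - ω0))]
    nlinarith
  have := mul_nonneg hh0.le (gauss_nonneg t x vH)
  have := mul_le_mul_of_nonneg_left h1 (by linarith : (0 : ℝ) ≤ 1 - h)
  unfold mixDens; linarith

lemma winProb_pos (h vH vL ω0 r : ℝ) (hvH : 0 < vH) (hvL : 0 < vL) (hh0 : 0 < h) (hh1 : h < 1)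
    (hr : 0 < r) (x : ℝ) : 0 < winProb h vH vL ω0 r x := by
  refine lt_of_lt_of_le ?_ (winProb_lower h vH vL ω0 r hvH hvL hh0 hh1 hr x)
  have : 0 < 1 - h := by linarith
  positivity

lemma winProb_meas (h vH vL ω0 r : ℝ) : Measurable (fun x => winProb h vH vL ω0 r x) := by
  unfold winProb
  refine (StronglyMeasurable.integral_prod_right (f := fun x t => mixDens h vH vL t x) ?_).measurable
  exact ((mix_meas h vH vL).comp measurable_swap).stronglyMeasurable

lemma winProb_ge_H (h vH vL ω0 r : ℝ) (hvH : 0 < vH) (hvL : 0 < vL) (hh0 : 0 < h) (hh1 : h < 1)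
    (hr : 0 < r) (x : ℝ) (hx : |x - ω0| ≤ r / 2) :
    h * (1 - 4 * vH / r ^ 2) ≤ winProb h vH vL ω0 r x := by
  have i0 := integrable_gauss x vH hvH
  have i2 := integrable_pow_gauss x vH x hvH 2
  have e : 1 - 4 * vH / r ^ 2 =
      ∫ t, (gauss t x vH - (4 / r ^ 2) * ((t - x) ^ 2 * gauss t x vH)) := by
    rw [integral_sub i0 (i2.const_mul _), integral_const_mul, integral_gauss1 _ _ hvH,
      integral_sq_gauss _ _ _ hvH]
    ring
  have h1 : 1 - 4 * vH / r ^ 2 ≤ ∫ t in Set.Icc (ω0 - r) (ω0 + r), gauss t x vH := by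
    rw [e, ← integral_indicator measurableSet_Icc]
    apply integral_mono (i0.sub (i2.const_mul _)) (i0.indicator measurableSet_Icc)
    intro t
    rw [Pi.sub_apply]
    have hg := gauss_nonneg t x vH
    by_cases ht : t ∈ Set.Icc (ω0 - r) (ω0 + r)
    · simp only [Set.indicator_of_mem ht]
      have : 0 ≤ (4 / r ^ 2) * ((t - x) ^ 2 * gauss t x vH) := by positivity
      linarith
    · simp only [Set.indicator_of_notMem ht]
      have h2 : (r / 2) ^ 2 ≤ (t - x) ^ 2 := by
        rw [abs_le] at hx
        rw [Set.mem_Icc, not_and_or, not_le, not_le] at ht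
        rcases ht with ht | ht <;> nlinarith
      have h3 : 1 ≤ (4 / r ^ 2) * (t - x) ^ 2 := by
        rw [div_mul_eq_mul_div, le_div_iff₀ (by positivity)]; linarith
      nlinarith
  refine (mul_le_mul_of_nonneg_left h1 hh0.le).trans ?_
  unfold winProb
  rw [← integral_const_mul]
  apply setIntegral_mono_on (i0.const_mul h).integrableOn
    (mix_int_s h vH vL hvH hvL x).integrableOn measurableSet_Icc
  intro t _
  have := mul_nonneg (by linarith : (0 : ℝ) ≤ 1 - h) (gauss_nonneg t x vL)
  unfold mixDens; linarith

/-- pointwise domination of the censored kernel -/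
lemma kern_bound (h vH vL ω0 v0 r : ℝ) (hvH : 0 < vH) (hvL : 0 < vL) (hv0 : 0 < v0)
    (hh0 : 0 < h) (hh1 : h < 1) (hr : 0 < r) (h4 : 4 * v0 ≤ vL) :
    ∃ C : ℝ, 0 ≤ C ∧ ∀ s x, mixDens h vH vL s x * gauss x ω0 v0 / winProb h vH vL ω0 r x ≤
      C * gauss x ω0 (2 * v0) := by
  have h1h : 0 < 1 - h := by linarith
  set M := h * (√(2 * π * vH))⁻¹ + (1 - h) * (√(2 * π * vL))⁻¹ with hM
  have hMp : 0 < M := by positivity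
  set c := (1 - h) * (√(2 * π * vL))⁻¹ * (2 * r) * Real.exp (-(r ^ 2) / vL) with hc
  have hcp : 0 < c := by positivity
  refine ⟨M * (√(2 * π * v0))⁻¹ / c * √(2 * π * (2 * v0)), by positivity, fun s x => ?_⟩
  have hm : mixDens h vH vL s x ≤ M :=
    add_le_add (mul_le_mul_of_nonneg_left (gauss_le _ _ _ hvH) hh0.le)
      (mul_le_mul_of_nonneg_left (gauss_le _ _ _ hvL) h1h.le)
  have hw : c * Real.exp (-(x - ω0) ^ 2 / vL) ≤ winProb h vH vL ω0 r x := by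
    refine le_of_eq_of_le ?_ (winProb_lower h vH vL ω0 r hvH hvL hh0 hh1 hr x)
    rw [show -((x - ω0) ^ 2 + r ^ 2) / vL = -(r ^ 2) / vL + -(x - ω0) ^ 2 / vL by ring,
      Real.exp_add, hc]
    ring
  have hg := gauss_nonneg x ω0 v0
  calc _ ≤ M * gauss x ω0 v0 / (c * Real.exp (-(x - ω0) ^ 2 / vL)) := by gcongr
    _ = M * (√(2 * π * v0))⁻¹ / c *
        Real.exp (-(x - ω0) ^ 2 / (2 * v0) - -(x - ω0) ^ 2 / vL) := by
      rw [Real.exp_sub]; unfold gauss; field_simp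
    _ ≤ M * (√(2 * π * v0))⁻¹ / c * Real.exp (-(x - ω0) ^ 2 / (2 * (2 * v0))) := by
      gcongr
      have : (x - ω0) ^ 2 / vL ≤ (x - ω0) ^ 2 / (4 * v0) := by gcongr
      have e : -(x - ω0) ^ 2 / (2 * v0) - -(x - ω0) ^ 2 / vL =
        (x - ω0) ^ 2 / vL - 2 * ((x - ω0) ^ 2 / (4 * v0)) := by field_simp; ring
      have e' : -(x - ω0) ^ 2 / (2 * (2 * v0)) = -((x - ω0) ^ 2 / (4 * v0)) := by ring
      rw [e, e']; linarith
    _ = _ := by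
      unfold gauss
      have : 0 < √(2 * π * (2 * v0)) := by positivity
      field_simp

/-- bound on the inner loss for the linear action -/
lemma inner_bound (h vH vL ω0 r k : ℝ) (hvH : 0 < vH) (hvL : 0 < vL)
    (hh0 : 0 < h) (hh1 : h < 1) (hr : 0 < r) (hk0 : 0 ≤ k) (hk1 : k ≤ 1)
    (hδ : 0 < 1 - 4 * vH / r ^ 2) (x : ℝ) :
    ∫ s in Set.Icc (ω0 - r) (ω0 + r), (x - (ω0 + k * (s - ω0))) ^ 2 *
        (mixDens h vH vL s x / winProb h vH vL ω0 r x) ≤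
      ((1 - k) ^ 2 * (x - ω0) ^ 2 + k ^ 2 * vH) / (1 - 4 * vH / r ^ 2) +
        6 * r ^ 3 * (√(2 * π * vL))⁻¹ / (h * (1 - 4 * vH / r ^ 2)) +
        40 / r ^ 2 * (x - ω0) ^ 4 := by
  set d := 1 - 4 * vH / r ^ 2 with hd
  set N := (√(2 * π * vL))⁻¹ with hN
  set D := winProb h vH vL ω0 r x with hD
  have hDp : 0 < D := winProb_pos h vH vL ω0 r hvH hvL hh0 hh1 hr x
  have hNp : 0 < N := by positivity
  have h1h : 0 < 1 - h := by linarith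
  have imix := mix_int_s h vH vL hvH hvL x
  have hsq : ∀ s ∈ Set.Icc (ω0 - r) (ω0 + r),
      (x - (ω0 + k * (s - ω0))) ^ 2 ≤ 2 * (x - ω0) ^ 2 + 2 * r ^ 2 := by
    intro s hs
    have h1 : (s - ω0) ^ 2 ≤ r ^ 2 := by
      apply sq_le_sq'
      · linarith [hs.1]
      · linarith [hs.2]
    have h2 : (k * (s - ω0)) ^ 2 ≤ r ^ 2 := by
      rw [mul_pow]
      have : k ^ 2 ≤ 1 := by nlinarith
      nlinarith [sq_nonneg (s - ω0)]
    nlinarith [sq_nonneg ((x - ω0) + k * (s - ω0))]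
  have ilhs : IntegrableOn (fun s => (x - (ω0 + k * (s - ω0))) ^ 2 *
        (mixDens h vH vL s x / D)) (Set.Icc (ω0 - r) (ω0 + r)) := by
    refine Integrable.mono' ((imix.div_const D).const_mul
      (2 * (x - ω0) ^ 2 + 2 * r ^ 2)).integrableOn ?_ ?_
    · apply AEStronglyMeasurable.mul
      · fun_prop
      · exact (imix.div_const D).aestronglyMeasurable.restrict
    · filter_upwards [ae_restrict_mem measurableSet_Icc] with s hs
      have hn : 0 ≤ mixDens h vH vL s x / D := div_nonneg (mix_nonneg h vH vL hh0 hh1 s x) hDp.le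
      rw [Real.norm_of_nonneg (by positivity)]
      exact mul_le_mul_of_nonneg_right (hsq s hs) hn
  by_cases hx : |x - ω0| ≤ r / 2
  · have hDge : h * d ≤ D := winProb_ge_H h vH vL ω0 r hvH hvL hh0 hh1 hr x hx
    have hx2 : (x - ω0) ^ 2 ≤ r ^ 2 / 4 := by
      rw [abs_le] at hx; nlinarith
    have e : ∀ s, (x - (ω0 + k * (s - ω0))) ^ 2 * gauss s x vH =
        ((1 - k) ^ 2 * (x - ω0) ^ 2) * gauss s x vH + (-2 * (1 - k) * (x - ω0) * k) *
          ((s - x) ^ 1 * gauss s x vH) + k ^ 2 * ((s - x) ^ 2 * gauss s x vH) := by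
      intro s; ring
    have i0 := integrable_gauss x vH hvH
    have i1 := integrable_pow_gauss x vH x hvH 1
    have i2 := integrable_pow_gauss x vH x hvH 2
    have m1 : ∫ s, (s - x) ^ 1 * gauss s x vH = 0 := by
      have q1 := integral_sq_gauss x vH x hvH
      have q2 := integral_sq_gauss x vH (x - 1) hvH
      have : (fun s => (s - (x - 1)) ^ 2 * gauss s x vH) = fun s =>
        ((s - x) ^ 2 * gauss s x vH + 2 * ((s - x) ^ 1 * gauss s x vH)) + gauss s x vH := by
        ext s; ring
      rw [this, integral_add (i2.fun_add (i1.const_mul 2)) i0, integral_add i2 (i1.const_mul 2),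
        integral_const_mul, q1, integral_gauss1 _ _ hvH] at q2
      linarith
    have iq : Integrable (fun s => (x - (ω0 + k * (s - ω0))) ^ 2 * gauss s x vH) := by
      simp_rw [e]
      exact ((i0.const_mul _).fun_add (i1.const_mul _)).fun_add (i2.const_mul _)
    have vq : ∫ s, (x - (ω0 + k * (s - ω0))) ^ 2 * gauss s x vH =
        (1 - k) ^ 2 * (x - ω0) ^ 2 + k ^ 2 * vH := by
      simp_rw [e]
      rw [integral_add ((i0.const_mul _).fun_add (i1.const_mul _)) (i2.const_mul _),
        integral_add (i0.const_mul _) (i1.const_mul _), integral_const_mul, integral_const_mul,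
        integral_const_mul, m1, integral_gauss1 _ _ hvH, integral_sq_gauss _ _ _ hvH]
      ring
    have hpt : ∀ s ∈ Set.Icc (ω0 - r) (ω0 + r), (x - (ω0 + k * (s - ω0))) ^ 2 *
        (mixDens h vH vL s x / D) ≤
        (x - (ω0 + k * (s - ω0))) ^ 2 * gauss s x vH / d + 3 * r ^ 2 * (N / (h * d)) := by
      intro s hs
      have hg := gauss_nonneg s x vH
      have hgL := gauss_nonneg s x vL
      have hle : mixDens h vH vL s x / D ≤ gauss s x vH / d + N / (h * d) := by
        calc mixDens h vH vL s x / D ≤ mixDens h vH vL s x / (h * d) := by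
              have := mix_nonneg h vH vL hh0 hh1 s x
              gcongr
          _ ≤ (h * gauss s x vH + N) / (h * d) := by
              gcongr
              unfold mixDens
              have : gauss s x vL ≤ N := gauss_le _ _ _ hvL
              nlinarith
          _ = _ := by field_simp
      have hB : (x - (ω0 + k * (s - ω0))) ^ 2 ≤ 3 * r ^ 2 := by
        have := hsq s hs; nlinarith
      calc _ ≤ (x - (ω0 + k * (s - ω0))) ^ 2 * (gauss s x vH / d + N / (h * d)) := by gcongr
        _ = (x - (ω0 + k * (s - ω0))) ^ 2 * gauss s x vH / d +
            (x - (ω0 + k * (s - ω0))) ^ 2 * (N / (h * d)) := by ring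
        _ ≤ _ := by gcongr
    have ic : IntegrableOn (fun _ : ℝ => 3 * r ^ 2 * (N / (h * d)))
      (Set.Icc (ω0 - r) (ω0 + r)) := integrableOn_const (by simp)
    have step := setIntegral_mono_on ilhs ((iq.div_const d).integrableOn.fun_add ic)
      measurableSet_Icc hpt
    refine step.trans ?_
    rw [integral_add (iq.div_const d).integrableOn ic, setIntegral_const]
    simp only [Real.volume_real_Icc, smul_eq_mul]
    rw [max_eq_left (by linarith)]
    have s1 : ∫ s in Set.Icc (ω0 - r) (ω0 + r),
        (x - (ω0 + k * (s - ω0))) ^ 2 * gauss s x vH / d ≤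
        ((1 - k) ^ 2 * (x - ω0) ^ 2 + k ^ 2 * vH) / d := by
      rw [← vq, ← integral_div]
      refine setIntegral_le_integral (iq.div_const d) (ae_of_all _ fun s => ?_)
      have hg := gauss_nonneg s x vH
      change 0 ≤ _; positivity
    have s2 : (ω0 + r - (ω0 - r)) * (3 * r ^ 2 * (N / (h * d))) = 6 * r ^ 3 * N / (h * d) := by
      ring
    have s3 : 0 ≤ 40 / r ^ 2 * (x - ω0) ^ 4 := by positivity
    rw [s2]; linarith
  · have hx2 : r ^ 2 / 4 ≤ (x - ω0) ^ 2 := by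
      rw [← sq_abs (x - ω0)]; push Not at hx; nlinarith
    have hx4 : 10 * (x - ω0) ^ 2 ≤ 40 / r ^ 2 * (x - ω0) ^ 4 := by
      rw [div_mul_eq_mul_div, le_div_iff₀ (by positivity)]
      nlinarith [mul_nonneg (sq_nonneg (x - ω0)) (sub_nonneg.2 hx2)]
    have hle : ∫ s in Set.Icc (ω0 - r) (ω0 + r), (x - (ω0 + k * (s - ω0))) ^ 2 *
        (mixDens h vH vL s x / D) ≤ 40 / r ^ 2 * (x - ω0) ^ 4 := by
      have : ∫ s in Set.Icc (ω0 - r) (ω0 + r), (40 / r ^ 2 * (x - ω0) ^ 4) *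
        (mixDens h vH vL s x / D) = 40 / r ^ 2 * (x - ω0) ^ 4 := by
        rw [integral_const_mul, integral_div]
        change _ * (D / D) = _
        rw [div_self hDp.ne', mul_one]
      rw [← this]
      refine setIntegral_mono_on ilhs ((imix.div_const D).const_mul _).integrableOn
        measurableSet_Icc fun s hs => ?_
      have hn : 0 ≤ mixDens h vH vL s x / D := div_nonneg (mix_nonneg h vH vL hh0 hh1 s x) hDp.le
      refine mul_le_mul_of_nonneg_right ?_ hn
      have := hsq s hs
      linarith
    have s1 : 0 ≤ ((1 - k) ^ 2 * (x - ω0) ^ 2 + k ^ 2 * vH) / d := by positivity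
    have s2 : 0 ≤ 6 * r ^ 3 * N / (h * d) := by positivity
    linarith

lemma lossCens_le (h vH vL ω0 v0 r : ℝ) (hvH : 0 < vH) (hvL : 0 < vL) (hv0 : 0 < v0)
    (hh0 : 0 < h) (hh1 : h < 1) (hr : 0 < r) (h4 : 4 * v0 ≤ vL)
    (hδ : 0 < 1 - 4 * vH / r ^ 2) :
    lossCens h vH vL ω0 v0 r ≤ (vH * v0 / (vH + v0)) / (1 - 4 * vH / r ^ 2) +
        6 * r ^ 3 * (√(2 * π * vL))⁻¹ / (h * (1 - 4 * vH / r ^ 2)) +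
        40 / r ^ 2 * ∫ x, (x - ω0) ^ 4 * gauss x ω0 v0 := by
  have hgm : Measurable (fun x => gauss x ω0 v0) := gauss_meas1 _ _
  obtain ⟨C, hC, hb⟩ := kern_bound h vH vL ω0 v0 r hvH hvL hv0 hh0 hh1 hr h4
  have hDp := winProb_pos h vH vL ω0 r hvH hvL hh0 hh1 hr
  have hnn : ∀ s x, 0 ≤ mixDens h vH vL s x * gauss x ω0 v0 / winProb h vH vL ω0 r x :=
    fun s x => div_nonneg (mul_nonneg (mix_nonneg h vH vL hh0 hh1 s x) (gauss_nonneg _ _ _))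
      (hDp x).le
  have hKm : Measurable (fun p : ℝ × ℝ =>
      mixDens h vH vL p.1 p.2 * gauss p.2 ω0 v0 / winProb h vH vL ω0 r p.2) :=
    ((mix_meas h vH vL).mul (hgm.comp measurable_snd)).div
      ((winProb_meas h vH vL ω0 r).comp measurable_snd)
  have hint : ∀ (s : ℝ) (n : ℕ), Integrable (fun x : ℝ => x ^ n *
      (mixDens h vH vL s x * gauss x ω0 v0 / winProb h vH vL ω0 r x)) := by
    intro s n
    have hi := ((integrable_pow_gauss ω0 (2 * v0) 0 (by positivity) n).norm).const_mul C
    refine hi.mono' ?_ (ae_of_all _ fun x => ?_)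
    · exact ((measurable_id.pow_const n).mul
        (hKm.comp (measurable_const.prodMk measurable_id))).aestronglyMeasurable
    · rw [norm_mul, norm_mul, Real.norm_of_nonneg (hnn s x),
        Real.norm_of_nonneg (gauss_nonneg x ω0 (2 * v0)), sub_zero]
      calc _ ≤ ‖x ^ n‖ * (C * gauss x ω0 (2 * v0)) := by
            gcongr; exact hb s x
        _ = _ := by ring
  set k := v0 / (v0 + vH) with hk
  have hk0 : 0 ≤ k := by positivity
  have hk1 : k ≤ 1 := by rw [hk, div_le_one (by positivity)]; linarith
  set W := Set.Icc (ω0 - r) (ω0 + r) with hW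
  set d := 1 - 4 * vH / r ^ 2 with hd
  set A := 6 * r ^ 3 * (√(2 * π * vL))⁻¹ / (h * d) with hA
  have hA0 : 0 ≤ A := by positivity
  have i0 := integrable_gauss ω0 v0 hv0
  have i2 := integrable_pow_gauss ω0 v0 ω0 hv0 2
  have i4 := integrable_pow_gauss ω0 v0 ω0 hv0 4
  -- the dominating function
  have eJ : ∀ x, (((1 - k) ^ 2 * (x - ω0) ^ 2 + k ^ 2 * vH) / d + A + 40 / r ^ 2 * (x - ω0) ^ 4) *
      gauss x ω0 v0 = (((1 - k) ^ 2 / d) * ((x - ω0) ^ 2 * gauss x ω0 v0) +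
        (k ^ 2 * vH / d + A) * gauss x ω0 v0) + (40 / r ^ 2) * ((x - ω0) ^ 4 * gauss x ω0 v0) := by
    intro x; ring
  have iJ : Integrable (fun x => (((1 - k) ^ 2 * (x - ω0) ^ 2 + k ^ 2 * vH) / d + A +
      40 / r ^ 2 * (x - ω0) ^ 4) * gauss x ω0 v0) := by
    simp_rw [eJ]
    exact ((i2.const_mul _).fun_add (i0.const_mul _)).fun_add (i4.const_mul _)
  have vJ : ∫ x, (((1 - k) ^ 2 * (x - ω0) ^ 2 + k ^ 2 * vH) / d + A +
      40 / r ^ 2 * (x - ω0) ^ 4) * gauss x ω0 v0 =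
      (vH * v0 / (vH + v0)) / d + A + 40 / r ^ 2 * ∫ x, (x - ω0) ^ 4 * gauss x ω0 v0 := by
    simp_rw [eJ]
    rw [integral_add ((i2.const_mul _).fun_add (i0.const_mul _)) (i4.const_mul _),
      integral_add (i2.const_mul _) (i0.const_mul _), integral_const_mul, integral_const_mul,
      integral_const_mul, integral_gauss1 _ _ hv0, integral_sq_gauss _ _ _ hv0]
    have : (1 - k) ^ 2 * v0 + k ^ 2 * vH = vH * v0 / (vH + v0) := by
      rw [hk]; field_simp; ring
    rw [← this]; ring
  have nJ : ∀ x, 0 ≤ (((1 - k) ^ 2 * (x - ω0) ^ 2 + k ^ 2 * vH) / d + A +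
      40 / r ^ 2 * (x - ω0) ^ 4) * gauss x ω0 v0 := by
    intro x
    have := gauss_nonneg x ω0 v0
    positivity
  have hup : ∫⁻ x, ∫⁻ s in W, ENNReal.ofReal ((x - (ω0 + k * (s - ω0))) ^ 2 *
      (mixDens h vH vL s x * gauss x ω0 v0 / winProb h vH vL ω0 r x)) ≤
      ENNReal.ofReal ((vH * v0 / (vH + v0)) / d + A +
        40 / r ^ 2 * ∫ x, (x - ω0) ^ 4 * gauss x ω0 v0) := by
    rw [← vJ, ofReal_integral_eq_lintegral_ofReal iJ (ae_of_all _ nJ)]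
    apply lintegral_mono
    intro x
    have hib := inner_bound h vH vL ω0 r k hvH hvL hh0 hh1 hr hk0 hk1 hδ x
    have imix := mix_int_s h vH vL hvH hvL x
    have ii : IntegrableOn (fun s => (x - (ω0 + k * (s - ω0))) ^ 2 *
      (mixDens h vH vL s x * gauss x ω0 v0 / winProb h vH vL ω0 r x)) W := by
      refine IntegrableOn.continuousOn_mul (by fun_prop) ?_ isCompact_Icc
      exact ((imix.mul_const _).div_const _).integrableOn
    have hi := ofReal_integral_eq_lintegral_ofReal ii
      (ae_of_all _ fun s => mul_nonneg (sq_nonneg _) (hnn s x))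
    refine hi.symm.trans_le (ENNReal.ofReal_le_ofReal ?_)
    refine le_trans (le_of_eq ?_) (mul_le_mul_of_nonneg_right hib (gauss_nonneg x ω0 v0))
    rw [← integral_mul_const]
    refine integral_congr_ae (ae_of_all _ fun s => ?_)
    ring
  have hfin := ne_top_of_le_ne_top ENNReal.ofReal_ne_top hup
  obtain ⟨hT, hle, hE⟩ := iter_opt (volume.restrict W)
    (fun s x => mixDens h vH vL s x * gauss x ω0 v0 / winProb h vH vL ω0 r x) hnn hKm
    (fun s => by simpa using hint s 0) (fun s => by simpa using hint s 1)
    (fun s => hint s 2) (fun s => ω0 + k * (s - ω0)) (by fun_prop) hfin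
    (aCens h vH vL ω0 v0 r) (fun s => rfl)
  have hL : lossCens h vH vL ω0 v0 r = ∫ x, ∫ s in W, (x - aCens h vH vL ω0 v0 r s) ^ 2 *
      (mixDens h vH vL s x * gauss x ω0 v0 / winProb h vH vL ω0 r x) := by
    unfold lossCens
    refine integral_congr_ae (ae_of_all _ fun x => ?_)
    simp only
    rw [← integral_mul_const]
    refine integral_congr_ae (ae_of_all _ fun s => ?_)
    ring
  rw [hL, hE]
  refine ENNReal.toReal_le_of_le_ofReal ?_ (hle.trans hup)
  rw [← vJ]; exact integral_nonneg nJ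

/-- Proposition 2 (`prop:finiter`): there is a threshold `ν* > σH²` such that whenever the
low-type signal variance is at least `ν*`, some finite censoring radius strictly beats the
uncensored strategy. -/
theorem stmt_3 (ω0 v0 vH h : ℝ) (hv0 : 0 < v0) (hvH : 0 < vH)
    (hh0 : 0 < h) (hh1 : h < 1) :
    ∃ ν : ℝ, vH < ν ∧ ∀ vL : ℝ, ν ≤ vL →
      ∃ r : ℝ, 0 < r ∧ lossCens h vH vL ω0 v0 r < lossUncens h vH vL ω0 v0 := by
  set VH := vH * v0 / (vH + v0) with hVH
  set V1 := (vH + 1) * v0 / ((vH + 1) + v0) with hV1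
  set m4 := ∫ x, (x - ω0) ^ 4 * gauss x ω0 v0 with hm4
  have hmono : ∀ v, vH + 1 ≤ v → V1 ≤ v * v0 / (v + v0) := by
    intro v hv
    rw [hV1, div_le_div_iff₀ (by positivity) (by linarith)]
    nlinarith [mul_pos hv0 hv0]
  have hlt : VH < V1 := by
    rw [hVH, hV1, div_lt_div_iff₀ (by positivity) (by positivity)]
    nlinarith [mul_pos hv0 hv0]
  have h1h : 0 < 1 - h := by linarith
  have hε : VH < VH + (1 - h) * (V1 - VH) := by nlinarith [mul_pos h1h (sub_pos.2 hlt)]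
  have hr2 : Tendsto (fun r : ℝ => r ^ 2) atTop atTop := tendsto_pow_atTop (by norm_num)
  have t1 : Tendsto (fun r : ℝ => 1 - 4 * vH / r ^ 2) atTop (nhds 1) := by
    simpa using (tendsto_const_nhds (x := (1 : ℝ))).sub (hr2.const_div_atTop (4 * vH))
  have t2 : Tendsto (fun r : ℝ => VH / (1 - 4 * vH / r ^ 2) + 40 / r ^ 2 * m4) atTop
      (nhds VH) := by
    simpa using ((tendsto_const_nhds (x := VH)).div t1 one_ne_zero).add
      ((hr2.const_div_atTop 40).mul_const m4)
  obtain ⟨r, ⟨hd, hr'⟩, hr⟩ := (((t1.eventually (lt_mem_nhds one_pos)).and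
    (t2.eventually (gt_mem_nhds hε))).and (eventually_gt_atTop 0)).exists
  have t3 : Tendsto (fun vL : ℝ => VH / (1 - 4 * vH / r ^ 2) +
        6 * r ^ 3 * (√(2 * π * vL))⁻¹ / (h * (1 - 4 * vH / r ^ 2)) + 40 / r ^ 2 * m4) atTop
      (nhds (VH / (1 - 4 * vH / r ^ 2) + 40 / r ^ 2 * m4)) := by
    have q : Tendsto (fun vL : ℝ => (√(2 * π * vL))⁻¹) atTop (nhds 0) := by
      apply tendsto_inv_atTop_zero.comp
      apply Real.tendsto_sqrt_atTop.comp
      exact tendsto_id.const_mul_atTop (by positivity)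
    have q2 := (((tendsto_const_nhds (x := VH / (1 - 4 * vH / r ^ 2))).add
      ((q.const_mul (6 * r ^ 3)).div_const (h * (1 - 4 * vH / r ^ 2))))).add
      (tendsto_const_nhds (x := 40 / r ^ 2 * m4))
    simpa using q2
  obtain ⟨ν, hν⟩ := eventually_atTop.1 (t3.eventually (gt_mem_nhds hr'))
  refine ⟨max ν (max (vH + 1) (4 * v0)), ?_, fun vL hvL => ⟨r, hr, ?_⟩⟩
  · exact lt_of_lt_of_le (by linarith) ((le_max_left _ _).trans (le_max_right _ _))
  · have a1 : ν ≤ vL := (le_max_left _ _).trans hvL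
    have a2 : vH + 1 ≤ vL := ((le_max_left _ _).trans (le_max_right _ _)).trans hvL
    have a3 : 4 * v0 ≤ vL := ((le_max_right _ _).trans (le_max_right _ _)).trans hvL
    have hvL0 : 0 < vL := by linarith
    have u := lossCens_le h vH vL ω0 v0 r hvH hvL0 hv0 hh0 hh1 hr a3 hd
    have l := lossUncens_ge h vH vL ω0 v0 hvH hvL0 hv0 hh0 hh1
    have p := hν vL a1
    have q := mul_le_mul_of_nonneg_left (hmono vL a2) h1h.le
    rw [← hVH] at u l
    rw [← hm4] at u
    linarith
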